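/- For every f with f+1 ≤ n and every formula ψ, the formula Byz_f ∧ B_{≥f+1}ψ → ψ is valid on the class KH: if at most f of the n agents are faulty and at least f+1 agents believe ψ, then ψ holds. -/

import Mathlib

/-- A Kripke model (raw data): valuation, and knowledge and hope relations for `n` agents. -/
structure Model (n : ℕ) (W : Type) where
  val : ℕ → W → Prop
  K : Fin n → W → W → Prop
  H : Fin n → W → W → Prop

/-- Membership in the class KH: each `K i` is an equivalence relation, each `H i` is
shift-serial, `H i ⊆ K i` (HinK), and oneH. -/
def Model.KH {n : ℕ} {W : Type} (M : Model n W) : Prop :=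
  (∀ i, Equivalence (M.K i)) ∧
  (∀ i w v, M.H i w v → ∃ z, M.H i v z) ∧
  (∀ i w v, M.H i w v → M.K i w v) ∧
  (∀ i w v, (∃ x, M.H i w x) → (∃ x, M.H i v x) → M.K i w v → M.H i w v)

/-- Formulas of the language `L_KH^pub`: atoms, negation, conjunction, knowledge `K i`,
hope `H i`, and public hope update `[φ_1,…,φ_n]ψ` (the tuple given as `Fin n → Form n`). -/
inductive Form (n : ℕ) : Type where
  | atom : ℕ → Form n
  | neg : Form n → Form n
  | and : Form n → Form n → Form n
  | know : Fin n → Form n → Form n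
  | hope : Fin n → Form n → Form n
  | upd : (Fin n → Form n) → Form n → Form n

/-- Replace the hope relations: `w H_i^χ v` iff `w K_i v`, `c i` holds at `w`, and at `v`. -/
def Model.hopeUpd {n : ℕ} {W : Type} (M : Model n W) (c : Fin n → W → Prop) : Model n W where
  val := M.val
  K := M.K
  H := fun i w v => M.K i w v ∧ c i w ∧ c i v

/-- Truth at a world. -/
def sat {n : ℕ} {W : Type} : Model n W → W → Form n → Prop
  | M, w, .atom p => M.val p w
  | M, w, .neg φ => ¬ sat M w φ
  | M, w, .and φ ψ => sat M w φ ∧ sat M w ψ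
  | M, w, .know i φ => ∀ v, M.K i w v → sat M v φ
  | M, w, .hope i φ => ∀ v, M.H i w v → sat M v φ
  | M, w, .upd φs ψ => sat (M.hopeUpd (fun i v => sat M v (φs i))) w ψ

/-- The publicly updated model `M^{φ⃗}`. -/
def Model.pubUpdate {n : ℕ} {W : Type} (M : Model n W) (φs : Fin n → Form n) : Model n W :=
  M.hopeUpd (fun i v => sat M v (φs i))

def ftop {n : ℕ} : Form n := .neg (.and (.atom 0) (.neg (.atom 0)))
def fbot {n : ℕ} : Form n := .neg ftop
def fimpl {n : ℕ} (φ ψ : Form n) : Form n := .neg (.and φ (.neg ψ))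
def forr {n : ℕ} (φ ψ : Form n) : Form n := .neg (.and (.neg φ) (.neg ψ))
def fiff {n : ℕ} (φ ψ : Form n) : Form n := .and (fimpl φ ψ) (fimpl ψ φ)
/-- `¬H_i⊥`: agent `i` is correct. -/
def fcorrect {n : ℕ} (i : Fin n) : Form n := .neg (.hope i fbot)

/-- Validity on the class KH: true at every world of every (nonempty) model in KH. -/
def Valid {n : ℕ} (φ : Form n) : Prop :=
  ∀ (W : Type) (M : Model n W), Nonempty W → M.KH → ∀ w : W, sat M w φ

/-- Conjunction of a list of formulas. -/
def bigAnd {n : ℕ} : List (Form n) → Form n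
  | [] => ftop
  | φ :: l => .and φ (bigAnd l)

/-- Disjunction of a list of formulas. -/
def bigOr {n : ℕ} : List (Form n) → Form n
  | [] => fbot
  | φ :: l => forr φ (bigOr l)

/-- The list of all groups `G ⊆ A` of agents with `|G| = k`. -/
noncomputable def groups (n k : ℕ) : List (Finset (Fin n)) :=
  ((Finset.univ : Finset (Fin n)).powerset.filter (fun G => G.card = k)).toList

/-- `Byz_f := ⋁_{G⊆A, |G|=n−f} ⋀_{i∈G} ¬H_i⊥`: at least `n−f` agents are correct,
i.e., at most `f` agents are faulty. -/
noncomputable def Byz (n f : ℕ) : Form n :=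
  bigOr ((groups n (n - f)).map (fun G => bigAnd (G.toList.map (fun i => fcorrect i))))

/-- `φ⃗^k := ⋁_{G⊆A, |G|=k} ⋀_{i∈G} φ_i`: at least `k` of the formulas `φ_i` hold. -/
noncomputable def vecAtLeast {n : ℕ} (φs : Fin n → Form n) (k : ℕ) : Form n :=
  bigOr ((groups n k).map (fun G => bigAnd (G.toList.map φs)))

/-- Belief: `B_i ψ := K_i(¬H_i⊥ → ψ)`. -/
def fbel {n : ℕ} (i : Fin n) (ψ : Form n) : Form n := .know i (fimpl (fcorrect i) ψ)

/-- `B_{≥f}ψ := ⋁_{G⊆A, |G|=f} ⋀_{i∈G} B_i ψ`: at least `f` agents believe `ψ`. -/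
noncomputable def Bge (n f : ℕ) (ψ : Form n) : Form n :=
  bigOr ((groups n f).map (fun G => bigAnd (G.toList.map (fun i => fbel i ψ))))

theorem sat_bigAnd_iff {n : ℕ} {W : Type} (M : Model n W) (w : W) (l : List (Form n)) :
    sat M w (bigAnd l) ↔ ∀ φ ∈ l, sat M w φ := by
  induction l with
  | nil => simp [bigAnd, ftop, sat]
  | cons a l ih => simp [bigAnd, sat, ih]

theorem sat_bigOr_iff {n : ℕ} {W : Type} (M : Model n W) (w : W) (l : List (Form n)) :
    sat M w (bigOr l) ↔ ∃ φ ∈ l, sat M w φ := by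
  induction l with
  | nil => simp [bigOr, fbot, ftop, sat]
  | cons a l ih =>
    simp only [bigOr, forr, sat, ih, List.mem_cons, exists_eq_or_imp]
    rw [not_and_or, not_not, not_not]

theorem sat_atLeast_iff {n : ℕ} {W : Type} (M : Model n W) (w : W) (φs : Fin n → Form n)
    (k : ℕ) :
    sat M w (bigOr ((groups n k).map (fun G => bigAnd (G.toList.map φs)))) ↔
      ∃ G : Finset (Fin n), G.card = k ∧ ∀ i ∈ G, sat M w (φs i) := by
  simp [sat_bigOr_iff, sat_bigAnd_iff, groups]

/-- for every `f` with `f+1 ≤ n` and every formula `ψ`, the formula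
`Byz_f ∧ B_{≥f+1}ψ → ψ` is valid on the class KH. -/
theorem byz_belief_implies {n f : ℕ} (hn : 0 < n) (hf : f + 1 ≤ n) (ψ : Form n) :
    Valid (fimpl (.and (Byz n f) (Bge n (f + 1) ψ)) ψ) := by
  intro W M _ hM w
  simp only [fimpl, sat]
  rintro ⟨⟨h1, h2⟩, h3⟩
  obtain ⟨G, hG, hc⟩ := (sat_atLeast_iff M w _ _).1 h1
  obtain ⟨G', hG', hb⟩ := (sat_atLeast_iff M w _ _).1 h2
  have hne : (G ∩ G').Nonempty := by
    rw [← Finset.card_pos]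
    have e1 := Finset.card_union_add_card_inter G G'
    have e2 := Finset.card_le_univ (G ∪ G')
    rw [Fintype.card_fin] at e2
    omega
  obtain ⟨i, hi⟩ := hne
  rw [Finset.mem_inter] at hi
  have hbi := hb i hi.2
  simp only [fbel, fimpl, sat] at hbi
  exact hbi w ((hM.1 i).refl w) ⟨hc i hi.1, h3⟩
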